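/- Let p ∈ (0,1), let (m_n) be natural numbers with m_n → ∞, let X_n be Binomial(m_n, p)-distributed random variables, and let (c_n) be real numbers with c_n → c. Then c_n·(X_n − m_n·p)/√(m_n) converges in distribution, as n → ∞, to the normal distribution with mean 0 and variance c²·p(1−p). -/

import Mathlib

open MeasureTheory ProbabilityTheory Filter Topology

/-- The Binomial(m, p) distribution as a measure on `ℝ`. -/
noncomputable def binomialReal (m : ℕ) (p : ℝ) : Measure ℝ :=
  ∑ k ∈ Finset.range (m + 1),
    (ENNReal.ofReal ((m.choose k : ℝ) * p ^ k * (1 - p) ^ (m - k))) •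
      Measure.dirac (k : ℝ)

/-- Convergence in distribution: weak convergence of the laws, i.e. convergence of the
integrals of every bounded continuous function. -/
def TendstoInDistribution (μs : ℕ → Measure ℝ) (μ : Measure ℝ) : Prop :=
  ∀ g : BoundedContinuousFunction ℝ ℝ,
    Tendsto (fun n => ∫ x, g x ∂(μs n)) atTop (𝓝 (∫ x, g x ∂μ))

/-- The χ²-distribution with one degree of freedom: the law of `Z ^ 2` for `Z` standard
normal. -/
noncomputable def chiSqOneDF : Measure ℝ :=
  (gaussianReal 0 1).map (fun z => z ^ 2)

open Asymptotics in
/-- If `z → 0` and `k z → t`, then `(1 + z) ^ k → exp t`, along an arbitrary filter. -/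
lemma tendsto_one_add_pow_exp_of_tendsto_mul {ι : Type*} {l : Filter ι} {k : ι → ℕ} {z : ι → ℂ}
    {t : ℂ} (hz : Tendsto z l (𝓝 0)) (hkz : Tendsto (fun i => (k i : ℂ) * z i) l (𝓝 t)) :
    Tendsto (fun i => (1 + z i) ^ k i) l (𝓝 (Complex.exp t)) := by
  have hlog : Tendsto (fun i => (k i : ℂ) * (Complex.log (1 + z i) - z i)) l (𝓝 0) := by
    have hO : (fun i => (k i : ℂ) * (Complex.log (1 + z i) - z i)) =O[l]
        fun i => (k i : ℂ) * z i ^ 2 :=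
      (isBigO_refl _ _).mul (Complex.log_sub_self_isBigO.comp_tendsto hz)
    refine hO.trans_tendsto ?_
    simpa [pow_two, mul_assoc] using hkz.mul hz
  have hsum : Tendsto (fun i => (k i : ℂ) * Complex.log (1 + z i)) l (𝓝 t) := by
    simpa [mul_sub] using hlog.add hkz
  refine ((Complex.continuous_exp.tendsto t).comp hsum).congr' ?_
  filter_upwards [hz.eventually_ne (show (0 : ℂ) ≠ -1 by simp)] with i hi
  have hne : 1 + z i ≠ 0 := fun h => hi (by linear_combination h)
  simp [Complex.exp_nat_mul, Complex.exp_log hne]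

/-- The characteristic function of the centered Bernoulli distribution. -/
noncomputable def centeredBernoulliCharFun (p s : ℝ) : ℂ :=
  p * Complex.exp (((1 - p) * s : ℝ) * Complex.I) +
    (1 - p) * Complex.exp ((-p * s : ℝ) * Complex.I)

lemma integral_binomialReal {E : Type*} [NormedAddCommGroup E] [NormedSpace ℝ E]
    [CompleteSpace E] (m : ℕ) {p : ℝ} (hp : p ∈ Set.Ioo (0 : ℝ) 1) (f : ℝ → E) :
    ∫ x, f x ∂(binomialReal m p) =
      ∑ k ∈ Finset.range (m + 1), ((m.choose k : ℝ) * p ^ k * (1 - p) ^ (m - k)) • f k := by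
  rw [binomialReal, integral_finsetSum_measure]
  · refine Finset.sum_congr rfl fun k _ => ?_
    have h0 := hp.1.le
    have h1 : 0 ≤ 1 - p := by linarith [hp.2]
    rw [integral_smul_measure, integral_dirac, ENNReal.toReal_ofReal (by positivity)]
  · exact fun k _ => (integrable_dirac (by simp)).smul_measure (by simp)

lemma charFun_map_mul_sub_binomialReal (m : ℕ) {p : ℝ} (hp : p ∈ Set.Ioo (0 : ℝ) 1) (a t : ℝ) :
    charFun ((binomialReal m p).map fun x => a * (x - m * p)) t =
      centeredBernoulliCharFun p (a * t) ^ m := by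
  rw [charFun_apply_real, integral_map (by fun_prop) (by fun_prop), integral_binomialReal m hp,
    centeredBernoulliCharFun, add_pow]
  refine Finset.sum_congr rfl fun k hk => ?_
  have hkm : k ≤ m := Nat.lt_succ_iff.1 (Finset.mem_range.1 hk)
  rw [mul_pow, mul_pow, ← Complex.exp_nat_mul, ← Complex.exp_nat_mul, Complex.real_smul]
  have hexp : Complex.exp ((t : ℂ) * ((a * ((k : ℝ) - m * p) : ℝ) : ℂ) * Complex.I) =
      Complex.exp ((k : ℂ) * (((1 - p) * (a * t) : ℝ) * Complex.I)) *
        Complex.exp (((m - k : ℕ) : ℂ) * ((-p * (a * t) : ℝ) * Complex.I)) := by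
    rw [← Complex.exp_add]
    congr 1
    push_cast [hkm]
    ring
  rw [hexp]
  push_cast
  ring

open Asymptotics in
lemma centeredBernoulliCharFun_sub_isLittleO (p : ℝ) :
    (fun s : ℝ => centeredBernoulliCharFun p s - (1 - (p * (1 - p) : ℝ) * (s : ℂ) ^ 2 / 2))
      =o[𝓝 0] fun s : ℝ => (s : ℂ) ^ 2 := by
  have hexp (b : ℝ) : (fun s : ℝ => Complex.exp ((b * s : ℝ) * Complex.I) -
      (1 + (b * s : ℝ) * Complex.I + ((b * s : ℝ) * Complex.I) ^ 2 / 2))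
        =o[𝓝 0] fun s : ℝ => (s : ℂ) ^ 2 := by
    have hb : Tendsto (fun s : ℝ => ((b * s : ℝ) : ℂ) * Complex.I) (𝓝 0) (𝓝 0) := by
      have : Continuous fun s : ℝ => ((b * s : ℝ) : ℂ) * Complex.I := by fun_prop
      simpa using this.tendsto 0
    have h := (Complex.exp_sub_sum_range_succ_isLittleO_pow 2).comp_tendsto hb
    refine (h.congr_left fun s => ?_).trans_isBigO ?_
    · simp [Finset.sum_range_succ]
    · refine .of_bound (b ^ 2) (.of_forall fun s => le_of_eq ?_)
      simp [mul_pow]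
  refine (((hexp (1 - p)).const_mul_left (p : ℂ)).add
    ((hexp (-p)).const_mul_left (1 - p : ℂ))).congr_left fun s => ?_
  simp only [centeredBernoulliCharFun, mul_pow, Complex.I_sq]
  push_cast
  ring

lemma tendsto_centeredBernoulliCharFun_pow {ι : Type*} {l : Filter ι} (p : ℝ) {k : ι → ℕ}
    {s : ι → ℝ} {v : ℝ} (hs : Tendsto s l (𝓝 0))
    (hks : Tendsto (fun i => (k i : ℝ) * s i ^ 2) l (𝓝 v)) :
    Tendsto (fun i => centeredBernoulliCharFun p (s i) ^ k i) l
      (𝓝 (Complex.exp (-(p * (1 - p) * v / 2 : ℝ)))) := by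
  have hksC : Tendsto (fun i => (k i : ℂ) * (s i : ℂ) ^ 2) l (𝓝 (v : ℂ)) := by
    simpa [Function.comp_def] using (Complex.continuous_ofReal.tendsto v).comp hks
  have hsC : Tendsto (fun i => (s i : ℂ) ^ 2) l (𝓝 0) := by
    simpa using ((Complex.continuous_ofReal.tendsto 0).comp hs).pow 2
  have ho := (centeredBernoulliCharFun_sub_isLittleO p).comp_tendsto hs
  have hrem := ho.isBigO.trans_tendsto hsC
  have hkrem := ((Asymptotics.isBigO_refl (fun i => (k i : ℂ)) l).mul_isLittleO ho).trans_isBigO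
    (hksC.isBigO_one ℂ)
  rw [Asymptotics.isLittleO_one_iff] at hkrem
  have hz : Tendsto (fun i => centeredBernoulliCharFun p (s i) - 1) l (𝓝 0) := by
    have := hrem.sub (hsC.const_mul ((p * (1 - p) : ℝ) / 2 : ℂ))
    rw [mul_zero, sub_zero] at this
    refine this.congr fun i => ?_
    simp only [Function.comp_apply]
    ring
  have hkz : Tendsto (fun i => (k i : ℂ) * (centeredBernoulliCharFun p (s i) - 1)) l
      (𝓝 (-(p * (1 - p) * v / 2 : ℝ))) := by
    have := hkrem.sub (hksC.const_mul ((p * (1 - p) : ℝ) / 2 : ℂ))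
    convert this.congr fun i => ?_ using 2
    · push_cast
      ring
    · simp only [Function.comp_apply]
      ring
  simpa using tendsto_one_add_pow_exp_of_tendsto_mul hz hkz

/-- Let `p ∈ (0,1)`, `m_n → ∞`, `X_n` Binomial(`m_n`, `p`)-distributed, and `c_n → c`. Then
`c_n·(X_n − m_n·p)/√(m_n)` converges in distribution to the normal distribution with mean `0`
and variance `c²·p(1−p)`. -/
theorem binomial_clt_scaled
    {Ω : Type*} [MeasurableSpace Ω] (P : Measure Ω) [IsProbabilityMeasure P]
    (p : ℝ) (hp : p ∈ Set.Ioo (0 : ℝ) 1)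
    (m : ℕ → ℕ) (hm : Tendsto m atTop atTop)
    (X : ℕ → Ω → ℝ) (hX : ∀ n, Measurable (X n))
    (hlaw : ∀ n, P.map (X n) = binomialReal (m n) p)
    (c : ℝ) (cs : ℕ → ℝ) (hc : Tendsto cs atTop (𝓝 c)) :
    TendstoInDistribution
      (fun n => P.map (fun ω => cs n * (X n ω - (m n : ℝ) * p) / Real.sqrt (m n)))
      (gaussianReal 0 (Real.toNNReal (c ^ 2 * p * (1 - p)))) := by
  have hp0 := hp.1.le
  have hp1 : 0 ≤ 1 - p := by linarith [hp.2]
  have hmeas n : Measurable fun ω => cs n * (X n ω - (m n : ℝ) * p) / √(m n) := by fun_prop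
  have hmap n : P.map (fun ω => cs n * (X n ω - (m n : ℝ) * p) / √(m n)) =
      (binomialReal (m n) p).map fun x => cs n / √(m n) * (x - m n * p) := by
    rw [← hlaw n, Measure.map_map (by fun_prop) (hX n)]
    congr 1
    ext ω
    simp only [Function.comp_apply]
    ring
  let μs : ℕ → ProbabilityMeasure ℝ := fun n =>
    ⟨P.map fun ω => cs n * (X n ω - (m n : ℝ) * p) / √(m n),
      Measure.isProbabilityMeasure_map (hmeas n).aemeasurable⟩
  let μ : ProbabilityMeasure ℝ := ⟨gaussianReal 0 (c ^ 2 * p * (1 - p)).toNNReal, inferInstance⟩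
  suffices Tendsto μs atTop (𝓝 μ) from
    ProbabilityMeasure.tendsto_iff_forall_integral_tendsto.1 this
  refine ProbabilityMeasure.tendsto_of_tendsto_charFun fun t => ?_
  simp only [μs, μ, ProbabilityMeasure.coe_mk, hmap, charFun_map_mul_sub_binomialReal _ hp,
    charFun_gaussianReal]
  have hinv : Tendsto (fun n => (√(m n))⁻¹) atTop (𝓝 0) :=
    tendsto_inv_atTop_zero.comp <| Real.tendsto_sqrt_atTop.comp <|
      tendsto_natCast_atTop_atTop.comp hm
  have hs : Tendsto (fun n => cs n / √(m n) * t) atTop (𝓝 0) := by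
    simpa [div_eq_mul_inv] using (hc.mul hinv).mul_const t
  have hks : Tendsto (fun n => (m n : ℝ) * (cs n / √(m n) * t) ^ 2) atTop
      (𝓝 (c ^ 2 * t ^ 2)) := by
    refine ((hc.pow 2).mul_const (t ^ 2)).congr' ?_
    filter_upwards [hm.eventually_gt_atTop 0] with n hn
    have hn' : (0 : ℝ) < m n := by exact_mod_cast hn
    rw [mul_pow, div_pow, Real.sq_sqrt hn'.le]
    field_simp
  convert tendsto_centeredBernoulliCharFun_pow p hs hks using 3
  rw [Real.coe_toNNReal _ (by positivity)]
  push_cast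
  ring
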